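/- arXiv:2503.08801 — 2 statements merged into one kernel-verified Lean document; each statement's English description precedes it below -/
import Mathlib

section
/- Let M ∈ ℕ. If 0 ≤ x < 1 and y ∈ ℝ satisfies erf(y) = x, then y ≥ S_M(x). If −1 < x ≤ 0 and y ∈ ℝ satisfies erf(y) = x, then y ≤ S_M(x). (Truncating the Maclaurin series of the inverse error function under-approximates it on [0,1) and over-approximates it on (−1,0].) -/
/-!
Write `F t = ∫₀ᵗ exp (-s²) ds`, so that `erf y = x` means `F y = (√π/2) x`, and put
`A_M(u) = ∑_{k ≤ M} c_k u^{2k}`, `P_M(u) = ∑_{k ≤ M} c_k u^{2k+1}/(2k+1)` and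
`B_M(u) = ∑_{k ≤ M} c_k u^{2k+2}/((k+1)(2k+1))`, so that `P_M' = A_M` and `B_M' = 2 P_M`.
The claim for `y ≥ 0` is `P_M (F y) ≤ y`; the case `y ≤ 0` follows since `F` and `P_M` are odd.

The stronger bound `A_M (F t) ≤ exp (t²)` for `t ≥ 0` is shown by induction on `M`
(`coeffSum_comp_le`). Given it for `M`, the derivative of `P_M ∘ F` is at most
`exp (t²) exp (-t²) = 1`, so `P_M (F t) ≤ t`. Hence the derivative of `B_M ∘ F` is at most
`2 t exp (-t²)`, so `B_M (F t) ≤ 1 - exp (-t²)`. The recurrence for `c_k` and the nonnegativity of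
its terms give `A_{M+1} ≤ 1 + A_M B_M` on `[0, ∞)` (`coeffSum_succ_le`), and
`1 + exp (t²) (1 - exp (-t²)) = exp (t²)` closes the induction.
-/

open Finset

/-- The error function `erf x = (2/√π) ∫₀ˣ exp (-t²) dt`. -/
noncomputable def erf (x : ℝ) : ℝ :=
  (2 / Real.sqrt Real.pi) * ∫ t in (0 : ℝ)..x, Real.exp (-t ^ 2)

/-- Maclaurin coefficients of the inverse error function. -/
noncomputable def invErfCoeff : ℕ → ℝ
  | 0 => 1
  | k + 1 => ∑ m ∈ (Finset.range (k + 1)).attach,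
      invErfCoeff m.1 * invErfCoeff (k - m.1) / ((m.1 + 1) * (2 * m.1 + 1))
decreasing_by
  · have := Finset.mem_range.mp m.2; omega
  · have := Finset.mem_range.mp m.2; omega

/-- `S M x = ∑_{k=0}^{M} (c k / (2k+1)) * ((√π/2) * x)^(2k+1)`. -/
noncomputable def invErfPartial (M : ℕ) (x : ℝ) : ℝ :=
  ∑ k ∈ Finset.range (M + 1),
    (invErfCoeff k / (2 * k + 1)) * ((Real.sqrt Real.pi / 2) * x) ^ (2 * k + 1)

/-- The unnormalised error function `∫₀ᵗ exp (-s²) ds`. -/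
noncomputable def gaussInt (t : ℝ) : ℝ := ∫ s in (0 : ℝ)..t, Real.exp (-s ^ 2)

/-- `A_M(u) = ∑_{k ≤ M} c_k u^{2k}`, the derivative of `coeffInt M`. -/
noncomputable def coeffSum (M : ℕ) (u : ℝ) : ℝ :=
  ∑ k ∈ range (M + 1), invErfCoeff k * u ^ (2 * k)

/-- `P_M(u) = ∑_{k ≤ M} c_k/(2k+1) u^{2k+1}`, so that `S_M(x) = P_M((√π/2) x)`. -/
noncomputable def coeffInt (M : ℕ) (u : ℝ) : ℝ :=
  ∑ k ∈ range (M + 1), invErfCoeff k / (2 * k + 1) * u ^ (2 * k + 1)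

/-- `B_M(u) = ∑_{k ≤ M} c_k/((k+1)(2k+1)) u^{2k+2}`, an antiderivative of `2 * coeffInt M`. -/
noncomputable def coeffIntInt (M : ℕ) (u : ℝ) : ℝ :=
  ∑ k ∈ range (M + 1), invErfCoeff k / ((k + 1) * (2 * k + 1)) * u ^ (2 * k + 2)

lemma invErfCoeff_succ (k : ℕ) : invErfCoeff (k + 1) = ∑ m ∈ range (k + 1),
    invErfCoeff m * invErfCoeff (k - m) / ((m + 1) * (2 * m + 1)) := by
  rw [invErfCoeff]
  exact sum_attach (range (k + 1))
    (fun m => invErfCoeff m * invErfCoeff (k - m) / (((m : ℝ) + 1) * (2 * m + 1)))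

lemma invErfCoeff_nonneg (k : ℕ) : 0 ≤ invErfCoeff k := by
  induction k using Nat.strong_induction_on with
  | _ k ih =>
    cases k with
    | zero => simp [invErfCoeff]
    | succ k =>
      rw [invErfCoeff_succ]
      refine sum_nonneg fun m hm => ?_
      have hm := mem_range.mp hm
      have h1 := ih m (by omega)
      have h2 := ih (k - m) (by omega)
      positivity

lemma hasDerivAt_gaussInt (t : ℝ) : HasDerivAt gaussInt (Real.exp (-t ^ 2)) t := by
  have hc : Continuous fun s : ℝ => Real.exp (-s ^ 2) := by fun_prop
  exact intervalIntegral.integral_hasDerivAt_right (hc.intervalIntegrable _ _)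
    (hc.stronglyMeasurableAtFilter _ _) hc.continuousAt

lemma gaussInt_zero : gaussInt 0 = 0 := by simp [gaussInt]

lemma gaussInt_strictMono : StrictMono gaussInt :=
  strictMono_of_deriv_pos fun t => by
    rw [(hasDerivAt_gaussInt t).deriv]; exact Real.exp_pos _

lemma gaussInt_nonneg {t : ℝ} (ht : 0 ≤ t) : 0 ≤ gaussInt t := by
  rw [← gaussInt_zero]; exact gaussInt_strictMono.monotone ht

lemma gaussInt_neg (t : ℝ) : gaussInt (-t) = -gaussInt t := by
  have h := intervalIntegral.integral_comp_neg (a := 0) (b := t)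
    (fun s : ℝ => Real.exp (-s ^ 2))
  simp only [neg_sq, neg_zero] at h
  rw [gaussInt, gaussInt, h, intervalIntegral.integral_symm]

lemma hasDerivAt_coeffInt (M : ℕ) (u : ℝ) : HasDerivAt (coeffInt M) (coeffSum M u) u := by
  refine HasDerivAt.fun_sum fun k _ => ?_
  refine ((hasDerivAt_pow (2 * k + 1) u).const_mul _).congr_deriv ?_
  have : (2 * (k : ℝ) + 1) ≠ 0 := by positivity
  push_cast
  field_simp

lemma hasDerivAt_coeffIntInt (M : ℕ) (u : ℝ) :
    HasDerivAt (coeffIntInt M) (2 * coeffInt M u) u := by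
  rw [coeffInt, mul_sum]
  refine HasDerivAt.fun_sum fun k _ => ?_
  refine ((hasDerivAt_pow (2 * k + 2) u).const_mul _).congr_deriv ?_
  have h1 : (2 * (k : ℝ) + 1) ≠ 0 := by positivity
  have h2 : ((k : ℝ) + 1) ≠ 0 := by positivity
  rw [show 2 * k + 2 - 1 = 2 * k + 1 by omega]
  push_cast
  field_simp

/-- Completing the Cauchy product of the recurrence to the full square of indices only adds
nonnegative terms; on power series the two sides would be equal. -/
lemma coeffSum_succ_le (M : ℕ) {u : ℝ} (hu : 0 ≤ u) :
    coeffSum (M + 1) u ≤ 1 + coeffIntInt M u * coeffSum M u := by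
  have h0 : invErfCoeff 0 = 1 := by simp [invErfCoeff]
  set f : ℕ → ℕ → ℝ := fun m j => invErfCoeff m / ((m + 1) * (2 * m + 1)) * u ^ (2 * m + 2) *
    (invErfCoeff j * u ^ (2 * j)) with hf
  have h1 : coeffSum (M + 1) u
      = ∑ k ∈ range (M + 1), ∑ m ∈ range (k + 1), f m (k - m) + 1 := by
    rw [coeffSum, sum_range_succ']
    simp only [h0, mul_zero, pow_zero, mul_one]
    congr 1
    refine sum_congr rfl fun k _ => ?_
    rw [invErfCoeff_succ, sum_mul]
    refine sum_congr rfl fun m hm => ?_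
    obtain ⟨j, rfl⟩ := Nat.exists_eq_add_of_le (Nat.lt_succ_iff.mp (mem_range.mp hm))
    simp only [hf, Nat.add_sub_cancel_left]
    ring
  rw [h1, sum_range_diag_flip, coeffIntInt, coeffSum, sum_mul_sum, add_comm]
  refine add_le_add_right (sum_le_sum fun m _ => ?_) 1
  refine sum_le_sum_of_subset_of_nonneg (range_mono (Nat.sub_le _ _)) fun j _ _ => ?_
  have h2 := invErfCoeff_nonneg m
  have h3 := invErfCoeff_nonneg j
  positivity

lemma le_of_hasDerivAt_le {f g f' g' : ℝ → ℝ} (h0 : f 0 = g 0)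
    (hf : ∀ t, HasDerivAt f (f' t) t) (hg : ∀ t, HasDerivAt g (g' t) t)
    (h : ∀ t, 0 ≤ t → f' t ≤ g' t) {t : ℝ} (ht : 0 ≤ t) : f t ≤ g t := by
  have hd : ∀ s, HasDerivAt (fun s => g s - f s) (g' s - f' s) s := fun s => (hg s).sub (hf s)
  have hm : MonotoneOn (fun s => g s - f s) (Set.Ici 0) := by
    refine monotoneOn_of_deriv_nonneg (convex_Ici 0)
      (fun s _ => (hd s).continuousAt.continuousWithinAt)
      (fun s _ => (hd s).differentiableAt.differentiableWithinAt) fun s hs => ?_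
    rw [interior_Ici] at hs
    rw [(hd s).deriv]
    exact sub_nonneg.mpr (h s (le_of_lt hs))
  have := hm Set.self_mem_Ici ht ht
  simp only [h0, sub_self] at this
  linarith

lemma coeffInt_comp_le_of_coeffSum {M : ℕ}
    (h : ∀ t, 0 ≤ t → coeffSum M (gaussInt t) ≤ Real.exp (t ^ 2)) {t : ℝ} (ht : 0 ≤ t) :
    coeffInt M (gaussInt t) ≤ t := by
  refine le_of_hasDerivAt_le (f := fun t => coeffInt M (gaussInt t)) (g := fun t => t) ?_
    (fun t => (hasDerivAt_coeffInt M _).comp t (hasDerivAt_gaussInt t)) hasDerivAt_id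
    (fun s hs => ?_) ht
  · simp [gaussInt_zero, coeffInt]
  · calc coeffSum M (gaussInt s) * Real.exp (-s ^ 2)
        ≤ Real.exp (s ^ 2) * Real.exp (-s ^ 2) := by gcongr; exact h s hs
      _ = 1 := by rw [← Real.exp_add, add_neg_cancel, Real.exp_zero]

lemma coeffIntInt_comp_le {M : ℕ} (h : ∀ t, 0 ≤ t → coeffInt M (gaussInt t) ≤ t) {t : ℝ}
    (ht : 0 ≤ t) : coeffIntInt M (gaussInt t) ≤ 1 - Real.exp (-t ^ 2) := by
  refine le_of_hasDerivAt_le (f := fun t => coeffIntInt M (gaussInt t))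
    (g := fun t => 1 - Real.exp (-t ^ 2)) (g' := fun t => 2 * t * Real.exp (-t ^ 2)) ?_
    (fun t => (hasDerivAt_coeffIntInt M _).comp t (hasDerivAt_gaussInt t)) (fun s => ?_)
    (fun s hs => ?_) ht
  · simp [gaussInt_zero, coeffIntInt]
  · refine (((hasDerivAt_pow 2 s).fun_neg.exp).const_sub 1).congr_deriv ?_
    norm_num
    ring
  · have := h s hs
    gcongr

lemma coeffSum_comp_le (M : ℕ) :
    ∀ t, 0 ≤ t → coeffSum M (gaussInt t) ≤ Real.exp (t ^ 2) := by
  induction M with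
  | zero =>
    intro t _
    simpa [coeffSum, invErfCoeff] using sq_nonneg t
  | succ M ih =>
    intro t ht
    have hB := coeffIntInt_comp_le (fun t ht => coeffInt_comp_le_of_coeffSum ih ht) ht
    have hE : Real.exp (-t ^ 2) * Real.exp (t ^ 2) = 1 := by
      rw [← Real.exp_add, neg_add_cancel, Real.exp_zero]
    have hA : 0 ≤ coeffSum M (gaussInt t) :=
      sum_nonneg fun k _ => mul_nonneg (invErfCoeff_nonneg k) (pow_nonneg (gaussInt_nonneg ht) _)
    have hexp : 0 ≤ 1 - Real.exp (-t ^ 2) := by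
      rw [sub_nonneg, Real.exp_le_one_iff]
      nlinarith [sq_nonneg t]
    calc coeffSum (M + 1) (gaussInt t)
        ≤ 1 + coeffIntInt M (gaussInt t) * coeffSum M (gaussInt t) :=
          coeffSum_succ_le M (gaussInt_nonneg ht)
      _ ≤ 1 + (1 - Real.exp (-t ^ 2)) * Real.exp (t ^ 2) := by
          gcongr
          exact ih t ht
      _ = Real.exp (t ^ 2) := by linear_combination -hE

lemma coeffInt_comp_le (M : ℕ) {t : ℝ} (ht : 0 ≤ t) : coeffInt M (gaussInt t) ≤ t :=
  coeffInt_comp_le_of_coeffSum (coeffSum_comp_le M) ht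

lemma coeffInt_neg (M : ℕ) (u : ℝ) : coeffInt M (-u) = -coeffInt M u := by
  rw [coeffInt, coeffInt, ← sum_neg_distrib]
  refine sum_congr rfl fun k _ => ?_
  rw [Odd.neg_pow ⟨k, rfl⟩, mul_neg]

lemma invErfPartial_erf (M : ℕ) (y : ℝ) : invErfPartial M (erf y) = coeffInt M (gaussInt y) := by
  have h : Real.sqrt Real.pi / 2 * erf y = gaussInt y := by
    have : Real.sqrt Real.pi ≠ 0 := (Real.sqrt_pos.mpr Real.pi_pos).ne'
    rw [erf, ← gaussInt]
    field_simp
  rw [invErfPartial, h, coeffInt]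

/-- `erf` and `gaussInt` differ by a positive factor, and `gaussInt` is strictly increasing. -/
lemma erf_nonneg_iff (y : ℝ) : 0 ≤ erf y ↔ 0 ≤ y := by
  have : 0 < 2 / Real.sqrt Real.pi := div_pos two_pos (Real.sqrt_pos.mpr Real.pi_pos)
  rw [erf, ← gaussInt, mul_nonneg_iff_of_pos_left this, ← gaussInt_zero,
    gaussInt_strictMono.le_iff_le, gaussInt_zero]

lemma erf_neg (y : ℝ) : erf (-y) = -erf y := by
  rw [erf, erf, ← gaussInt, ← gaussInt, gaussInt_neg, mul_neg]

/-- Truncating the Maclaurin series of the inverse error function under-approximates it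
on `[0,1)` and over-approximates it on `(-1,0]`. -/
theorem invErfPartial_le_invErf (M : ℕ) (x y : ℝ) :
    (0 ≤ x → x < 1 → erf y = x → invErfPartial M x ≤ y) ∧
    (-1 < x → x ≤ 0 → erf y = x → y ≤ invErfPartial M x) := by
  constructor
  · rintro hx - rfl
    rw [invErfPartial_erf]
    exact coeffInt_comp_le M ((erf_nonneg_iff y).mp hx)
  · rintro - hx rfl
    have hy : 0 ≤ -y := (erf_nonneg_iff (-y)).mp (by rw [erf_neg]; linarith)
    have h := coeffInt_comp_le M hy
    rw [gaussInt_neg, coeffInt_neg] at h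
    rw [invErfPartial_erf]
    linarith
end

section
/- (Certified radius of the smoothed classifier.) Let σ > 0, d ≥ 1, and let f_A, f_B : ℝ^d → [0,1] be measurable with f_A + f_B ≤ 1 pointwise. Let ĥ_A and ĥ_B be their Gaussian smoothings, and fix x ∈ ℝ^d. Suppose u_A, u_B ∈ ℝ satisfy Φ(u_A) = ĥ_A(x), Φ(u_B) = ĥ_B(x), and u_A > u_B. Then for every perturbation τ ∈ ℝ^d with ‖τ‖ < (σ/2)·(u_A − u_B), one has ĥ_A(x+τ) > ĥ_B(x+τ). (That is, the smoothed classifier's prediction of class A over class B is certified within the radius R₂ = (σ/2)·(Φ⁻¹(ĥ_A(x)) − Φ⁻¹(ĥ_B(x))).) -/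
/-!
The argument is that of Neyman and Pearson. For two Gaussians `N(x, σ² I)` and `N(x + τ, σ² I)` the
likelihood ratio is an increasing function of the coordinate along `τ`. Hence, among functions
`f : ℝ^d → [0,1]` whose mean under `N(x, σ² I)` is at least `Φ(u)`, the mean under `N(x + τ, σ² I)`
is smallest for the indicator of the half-space `⟪τ/‖τ‖, z - x⟫ ≤ σ u`, where it equals
`Φ(u - ‖τ‖/σ)` (`shift_lower_bound`). The half-space masses come from the fact that one-dimensional
projections of the Gaussian are standard normal, checked on characteristic functions
(`map_proj_gaussDensity`).

If `ĥ_A(x + τ) ≤ ĥ_B(x + τ)`, the bound for `f_A` from `x` to `x + τ` gives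
`Φ(u_A - ‖τ‖/σ) ≤ ĥ_B(x + τ)`, and the bound for `f_B` from `x + τ` back to `x` gives
`Φ(u_A - 2‖τ‖/σ) ≤ ĥ_B(x) = Φ(u_B)`. Since `Φ` is strictly increasing and `2‖τ‖/σ < u_A - u_B`,
this is impossible. Moving `f_B` back to `x` avoids a separate upper bound for `ĥ_B(x + τ)`.
-/

open MeasureTheory

/-- The standard normal cumulative distribution function. -/
noncomputable def stdNormalCDF (y : ℝ) : ℝ :=
  ∫ t in Set.Iic y, (1 / Real.sqrt (2 * Real.pi)) * Real.exp (-t ^ 2 / 2)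

open ProbabilityTheory

/-- The density at `z` of the Gaussian `N(x, σ² I_d)` on `ℝ^d`. -/
noncomputable def gaussDensity {d : ℕ} (σ : ℝ) (x z : EuclideanSpace ℝ (Fin d)) : ℝ :=
  (2 * Real.pi * σ ^ 2) ^ (-(d : ℝ) / 2) * Real.exp (-‖x - z‖ ^ 2 / (2 * σ ^ 2))

lemma gaussDensity_nonneg {d : ℕ} (σ : ℝ) (x z : EuclideanSpace ℝ (Fin d)) :
    0 ≤ gaussDensity σ x z := by
  unfold gaussDensity; positivity

lemma continuous_gaussDensity {d : ℕ} (σ : ℝ) (x : EuclideanSpace ℝ (Fin d)) :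
    Continuous (gaussDensity σ x) := by
  unfold gaussDensity; fun_prop

lemma integrable_gaussDensity {d : ℕ} {σ : ℝ} (hσ : 0 < σ) (x : EuclideanSpace ℝ (Fin d)) :
    Integrable (gaussDensity σ x) := by
  have hb : 0 < 1 / (2 * σ ^ 2) := by positivity
  have h : Integrable
      (fun v : EuclideanSpace ℝ (Fin d) => Real.exp (-(1 / (2 * σ ^ 2)) * ‖v‖ ^ 2)) := by
    apply Integrable.of_integral_ne_zero
    rw [GaussianFourier.integral_rexp_neg_mul_sq_norm hb]
    positivity
  refine ((h.comp_sub_left x).const_mul ((2 * Real.pi * σ ^ 2) ^ (-(d : ℝ) / 2))).congr ?_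
  refine Filter.Eventually.of_forall fun z => ?_
  simp only [gaussDensity]
  congr 2
  ring

lemma integral_withDensity_gaussDensity {d : ℕ} {F : Type*} [NormedAddCommGroup F]
    [NormedSpace ℝ F] (σ : ℝ) (x : EuclideanSpace ℝ (Fin d)) (g : EuclideanSpace ℝ (Fin d) → F) :
    ∫ z, g z ∂(volume.withDensity fun z => ENNReal.ofReal (gaussDensity σ x z)) =
      ∫ z, gaussDensity σ x z • g z := by
  rw [integral_withDensity_eq_integral_toReal_smul
    (continuous_gaussDensity σ x).measurable.ennreal_ofReal (by simp)]
  simp only [ENNReal.toReal_ofReal (gaussDensity_nonneg σ x _)]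

/-- The normalised projection of `N(x, σ² I_d)` on a unit vector is standard normal; both laws
have the characteristic function `exp (-t² / 2)`. -/
lemma map_proj_gaussDensity {d : ℕ} {σ : ℝ} (hσ : 0 < σ) (x e : EuclideanSpace ℝ (Fin d))
    (he : ‖e‖ = 1) :
    (volume.withDensity fun z => ENNReal.ofReal (gaussDensity σ x z)).map
      (fun z => inner ℝ e (z - x) / σ) = gaussianReal 0 1 := by
  have hfin : IsFiniteMeasure
      (volume.withDensity fun z => ENNReal.ofReal (gaussDensity σ x z)) :=
    isFiniteMeasure_withDensity_ofReal (integrable_gaussDensity hσ x).2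
  apply Measure.ext_of_charFun
  funext t
  rw [charFun_gaussianReal, charFun_apply_real, integral_map (by fun_prop) (by fun_prop),
    integral_withDensity_gaussDensity,
    ← integral_add_right_eq_self _ x]
  have hσC : (σ : ℂ) ≠ 0 := by exact_mod_cast hσ.ne'
  have hpos : 0 < 2 * Real.pi * σ ^ 2 := by positivity
  have hb : 0 < ((1 / (2 * σ ^ 2) : ℝ) : ℂ).re := by
    rw [Complex.ofReal_re]; positivity
  have key := GaussianFourier.integral_cexp_neg_mul_sq_norm_add hb
    ((t / σ : ℝ) * Complex.I) e
  have hcongr : ∀ v : EuclideanSpace ℝ (Fin d),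
      gaussDensity σ x (v + x) •
        Complex.exp (t * ((inner ℝ e (v + x - x) / σ : ℝ) : ℂ) * Complex.I) =
      (((2 * Real.pi * σ ^ 2) ^ (-(d : ℝ) / 2) : ℝ) : ℂ) *
        Complex.exp (-((1 / (2 * σ ^ 2) : ℝ) : ℂ) * ‖v‖ ^ 2 +
          ((t / σ : ℝ) * Complex.I) * (inner ℝ e v : ℝ)) := by
    intro v
    have h1 : x - (v + x) = -v := by abel
    rw [gaussDensity, h1, norm_neg, add_sub_cancel_right, Complex.real_smul, Complex.exp_add]
    push_cast
    rw [mul_assoc]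
    congr 2
    · congr 1; ring
    · congr 1; ring
  have hconst : (((2 * Real.pi * σ ^ 2) ^ (-(d : ℝ) / 2) : ℝ) : ℂ) *
      (Real.pi / ((1 / (2 * σ ^ 2) : ℝ) : ℂ)) ^
        (Module.finrank ℝ (EuclideanSpace ℝ (Fin d)) / 2 : ℂ) = 1 := by
    have h2 : (Real.pi / ((1 / (2 * σ ^ 2) : ℝ) : ℂ)) = ((2 * Real.pi * σ ^ 2 : ℝ) : ℂ) := by
      push_cast; field_simp
    have h3 : (Module.finrank ℝ (EuclideanSpace ℝ (Fin d)) / 2 : ℂ) = ((d / 2 : ℝ) : ℂ) := by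
      simp
    rw [h2, h3, ← Complex.ofReal_cpow hpos.le, ← Complex.ofReal_mul, ← Real.rpow_add hpos]
    simp [neg_div]
  simp_rw [hcongr]
  rw [integral_const_mul, key, ← mul_assoc, hconst, one_mul, he]
  congr 1
  push_cast
  rw [mul_pow, Complex.I_sq]
  field_simp
  ring

lemma stdNormalCDF_integrand (t : ℝ) :
    (1 / Real.sqrt (2 * Real.pi)) * Real.exp (-t ^ 2 / 2) = gaussianPDFReal 0 1 t := by
  simp [gaussianPDFReal]

lemma stdNormalCDF_eq (u : ℝ) : stdNormalCDF u = (gaussianReal 0 1).real (Set.Iic u) := by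
  rw [stdNormalCDF, measureReal_def, gaussianReal_apply_eq_integral _ one_ne_zero,
    ENNReal.toReal_ofReal (integral_nonneg fun t => gaussianPDFReal_nonneg 0 1 t)]
  simp only [stdNormalCDF_integrand]

lemma stdNormalCDF_strictMono : StrictMono stdNormalCDF := by
  intro a b hab
  have hint : Integrable (gaussianPDFReal 0 1) := integrable_gaussianPDFReal 0 1
  have h : stdNormalCDF b - stdNormalCDF a = ∫ t in a..b, gaussianPDFReal 0 1 t := by
    simp only [stdNormalCDF, stdNormalCDF_integrand]
    exact intervalIntegral.integral_Iic_sub_Iic hint.integrableOn hint.integrableOn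
  have hpos : 0 < ∫ t in a..b, gaussianPDFReal 0 1 t :=
    intervalIntegral.intervalIntegral_pos_of_pos hint.intervalIntegrable
      (fun t => gaussianPDFReal_pos 0 1 t one_ne_zero) hab
  linarith

lemma measurableSet_halfSpace {d : ℕ} (σ u : ℝ) (x e : EuclideanSpace ℝ (Fin d)) :
    MeasurableSet {z | inner ℝ e (z - x) / σ ≤ u} :=
  measurableSet_le (by fun_prop) measurable_const

lemma integral_halfSpace {d : ℕ} {σ : ℝ} (hσ : 0 < σ) (x e : EuclideanSpace ℝ (Fin d))
    (he : ‖e‖ = 1) (u : ℝ) :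
    ∫ z, {z | inner ℝ e (z - x) / σ ≤ u}.indicator 1 z * gaussDensity σ x z =
      stdNormalCDF u := by
  have hS := measurableSet_halfSpace σ u x e
  rw [stdNormalCDF_eq, ← map_proj_gaussDensity hσ x e he,
    map_measureReal_apply (by fun_prop) measurableSet_Iic]
  change _ = (volume.withDensity fun z => ENNReal.ofReal (gaussDensity σ x z)).real
    {z | inner ℝ e (z - x) / σ ≤ u}
  rw [← integral_indicator_one hS, integral_withDensity_gaussDensity]
  simp only [smul_eq_mul, mul_comm]

/-- Neyman–Pearson bound. Among all `f : ℝ^d → [0,1]` with a given Gaussian mass at `x`, the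
half-space orthogonal to `τ` on the side away from `τ` has the smallest mass at `x + τ`, because
the likelihood ratio of the two Gaussians increases in the direction of `τ`. -/
lemma shift_lower_bound {d : ℕ} {σ : ℝ} (hσ : 0 < σ) (f : EuclideanSpace ℝ (Fin d) → ℝ)
    (hf : Measurable f) (hf0 : ∀ z, 0 ≤ f z) (hf1 : ∀ z, f z ≤ 1)
    (x τ : EuclideanSpace ℝ (Fin d)) (u : ℝ)
    (hu : stdNormalCDF u ≤ ∫ z, f z * gaussDensity σ x z) :
    stdNormalCDF (u - ‖τ‖ / σ) ≤ ∫ z, f z * gaussDensity σ (x + τ) z := by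
  rcases eq_or_ne τ 0 with rfl | hτ
  · simpa using hu
  have hn : 0 < ‖τ‖ := norm_pos_iff.2 hτ
  set e := ‖τ‖⁻¹ • τ with he_def
  have he : ‖e‖ = 1 := by simp [he_def, norm_smul, hn.ne']
  have hτe : τ = ‖τ‖ • e := by simp [he_def, smul_smul, hn.ne']
  have hint : ∀ (g : EuclideanSpace ℝ (Fin d) → ℝ) (y : EuclideanSpace ℝ (Fin d)), Measurable g →
      (∀ z, 0 ≤ g z) → (∀ z, g z ≤ 1) → Integrable fun z => g z * gaussDensity σ y z := by
    intro g y hg hg0 hg1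
    refine (integrable_gaussDensity hσ y).bdd_mul (c := 1) hg.aestronglyMeasurable ?_
    exact Filter.Eventually.of_forall fun z => by
      rw [Real.norm_of_nonneg (hg0 z)]; exact hg1 z
  set S := {z | inner ℝ e (z - x) / σ ≤ u} with hS_def
  set χ : EuclideanSpace ℝ (Fin d) → ℝ := S.indicator 1 with hχ
  have hχm : Measurable χ :=
    measurable_one.indicator (measurableSet_halfSpace σ u x e)
  have hχ0 : ∀ z, 0 ≤ χ z := Set.indicator_nonneg fun _ _ => zero_le_one
  have hχ1 : ∀ z, χ z ≤ 1 := Set.indicator_le_self' (fun _ _ => zero_le_one)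
  have hmx : ∫ z, χ z * gaussDensity σ x z = stdNormalCDF u := integral_halfSpace hσ x e he u
  have hinn : ∀ z, inner ℝ e (z - (x + τ)) = inner ℝ e (z - x) - ‖τ‖ := by
    intro z
    have h : inner ℝ e τ = ‖τ‖ := by
      conv_lhs => rw [hτe]
      rw [inner_smul_right, real_inner_self_eq_norm_sq, he]; simp
    rw [← sub_sub, inner_sub_right, h]
  have hmτ : ∫ z, χ z * gaussDensity σ (x + τ) z = stdNormalCDF (u - ‖τ‖ / σ) := by
    rw [← integral_halfSpace hσ (x + τ) e he (u - ‖τ‖ / σ)]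
    have : {z | inner ℝ e (z - (x + τ)) / σ ≤ u - ‖τ‖ / σ} = S := by
      ext z
      simp only [hS_def, Set.mem_ofPred_eq, hinn, sub_div, sub_le_sub_iff_right]
    rw [this]
  have hratio : ∀ z, gaussDensity σ (x + τ) z =
      Real.exp (‖τ‖ / σ * (inner ℝ e (z - x) / σ) - ‖τ‖ ^ 2 / (2 * σ ^ 2)) *
        gaussDensity σ x z := by
    intro z
    have hsq : ‖x + τ - z‖ ^ 2 =
        ‖x - z‖ ^ 2 - 2 * (‖τ‖ * inner ℝ e (z - x)) + ‖τ‖ ^ 2 := by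
      have h1 : x + τ - z = τ - (z - x) := by abel
      have h2 : inner ℝ τ (z - x) = ‖τ‖ * inner ℝ e (z - x) := by
        conv_lhs => rw [hτe]
        rw [real_inner_smul_left]
      rw [h1, norm_sub_sq_real, h2, norm_sub_rev x z]; ring
    rw [gaussDensity, gaussDensity, hsq, mul_left_comm (Real.exp _), ← Real.exp_add]
    congr 2
    field_simp
    ring
  -- The likelihood ratio on the boundary of the half-space.
  set c := Real.exp (‖τ‖ / σ * u - ‖τ‖ ^ 2 / (2 * σ ^ 2)) with hc
  have hpt : ∀ z, 0 ≤ (f z - χ z) * (gaussDensity σ (x + τ) z - c * gaussDensity σ x z) := by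
    intro z
    rw [hratio, ← sub_mul, ← mul_assoc]
    refine mul_nonneg ?_ (gaussDensity_nonneg σ x z)
    by_cases hz : z ∈ S
    · refine mul_nonneg_of_nonpos_of_nonpos ?_ ?_
      · simpa [hχ, hz] using hf1 z
      · have hz' : inner ℝ e (z - x) / σ ≤ u := hz
        rw [sub_nonpos, hc]; gcongr
    · refine mul_nonneg ?_ ?_
      · simpa [hχ, hz] using hf0 z
      · have hz' : u ≤ inner ℝ e (z - x) / σ := (not_le.1 hz).le
        rw [sub_nonneg, hc]; gcongr
  have hI := integral_nonneg (μ := volume) (Pi.le_def.2 hpt)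
  have i1 := hint f (x + τ) hf hf0 hf1
  have i2 := hint χ (x + τ) hχm hχ0 hχ1
  have i3 := hint f x hf hf0 hf1
  have i4 := hint χ x hχm hχ0 hχ1
  have hsplit : ∫ z, (f z - χ z) * (gaussDensity σ (x + τ) z - c * gaussDensity σ x z) =
      ((∫ z, f z * gaussDensity σ (x + τ) z) - ∫ z, χ z * gaussDensity σ (x + τ) z) -
        c * ((∫ z, f z * gaussDensity σ x z) - ∫ z, χ z * gaussDensity σ x z) := by
    rw [← integral_sub i1 i2, ← integral_sub i3 i4, ← integral_const_mul]
    refine Eq.trans ?_ (integral_sub (i1.sub i2) ((i3.sub i4).const_mul c))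
    congr 1
    funext z
    ring
  rw [hsplit, hmτ, hmx] at hI
  have := mul_nonneg (Real.exp_pos (‖τ‖ / σ * u - ‖τ‖ ^ 2 / (2 * σ ^ 2))).le (sub_nonneg.2 hu)
  rw [← hc] at this
  linarith

/-- Certified radius of the smoothed classifier: if `ĥ_A(x) = Φ(u_A)`,
`ĥ_B(x) = Φ(u_B)` with `u_A > u_B`, then class `A` dominates class `B` under the
smoothed classifier for all perturbations of norm `< (σ/2)(u_A - u_B)`. -/
theorem smoothed_certified_radius (d : ℕ) (hd : 1 ≤ d) (σ : ℝ) (hσ : 0 < σ)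
    (fA fB : EuclideanSpace ℝ (Fin d) → ℝ)
    (hfA : Measurable fA) (hfB : Measurable fB)
    (hfA0 : ∀ z, 0 ≤ fA z) (hfB0 : ∀ z, 0 ≤ fB z)
    (hAB : ∀ z, fA z + fB z ≤ 1)
    (hA hB : EuclideanSpace ℝ (Fin d) → ℝ)
    (hhA : ∀ x, hA x = ∫ z, fA z *
      ((2 * Real.pi * σ ^ 2) ^ (-(d : ℝ) / 2) * Real.exp (-‖x - z‖ ^ 2 / (2 * σ ^ 2))))
    (hhB : ∀ x, hB x = ∫ z, fB z *
      ((2 * Real.pi * σ ^ 2) ^ (-(d : ℝ) / 2) * Real.exp (-‖x - z‖ ^ 2 / (2 * σ ^ 2))))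
    (x : EuclideanSpace ℝ (Fin d)) (uA uB : ℝ)
    (huA : stdNormalCDF uA = hA x) (huB : stdNormalCDF uB = hB x)
    (huAB : uB < uA)
    (τ : EuclideanSpace ℝ (Fin d)) (hτ : ‖τ‖ < σ / 2 * (uA - uB)) :
    hB (x + τ) < hA (x + τ) := by
  by_contra! hcon
  have h1 : stdNormalCDF (uA - ‖τ‖ / σ) ≤ ∫ z, fA z * gaussDensity σ (x + τ) z :=
    shift_lower_bound hσ fA hfA hfA0 (fun z => by linarith [hAB z, hfB0 z]) x τ uA
      (huA.trans (hhA x)).le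
  have h2 : stdNormalCDF (uA - ‖τ‖ / σ) ≤ ∫ z, fB z * gaussDensity σ (x + τ) z :=
    (h1.trans (hhA (x + τ)).ge).trans (hcon.trans (hhB (x + τ)).le)
  have h3 := shift_lower_bound hσ fB hfB hfB0 (fun z => by linarith [hAB z, hfA0 z]) (x + τ) (-τ)
    (uA - ‖τ‖ / σ) h2
  rw [norm_neg, add_neg_cancel_right] at h3
  have h4 : stdNormalCDF (uA - ‖τ‖ / σ - ‖τ‖ / σ) ≤ stdNormalCDF uB :=
    h3.trans (huB.trans (hhB x)).ge
  have h5 := stdNormalCDF_strictMono.le_iff_le.1 h4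
  have h6 : ‖τ‖ / σ < (uA - uB) / 2 := by
    rw [div_lt_iff₀ hσ]; linarith
  linarith
end
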